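/- Let Σ_A(ℕ) be a topologically mixing, finitely primitive (BIP) countable Markov shift, f : Σ_A(ℕ) → ℝ satisfying the Walters condition with Var_1 f < ∞ and P(f) < ∞, and for β > 1 let μ_β be the Gibbs measure of βf. Then there exist constants η_1 and η_2 such that for every β > 1, every x = (x_0, x_1, x_2, …) ∈ Σ_A(ℕ) and every m ≥ 1: e^{β η_1} ≤ μ_β([x_0 … x_{m−1}]) / exp(β S_m f(x) − m P(βf)) ≤ e^{β η_2}. -/

import Mathlib

open Filter Topology MeasureTheory
open scoped ENNReal

/-- The countable Markov shift over alphabet ℕ determined by the 0-1 matrix `A`. -/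
def MarkovShift (A : ℕ → ℕ → Bool) : Type :=
  {x : ℕ → ℕ // ∀ i, A (x i) (x (i + 1)) = true}

namespace MarkovShift

variable {A : ℕ → ℕ → Bool}

instance : TopologicalSpace (MarkovShift A) :=
  instTopologicalSpaceSubtype

instance : MeasurableSpace (MarkovShift A) := borel _

instance : BorelSpace (MarkovShift A) := ⟨rfl⟩

/-- The shift map. -/
def shift (x : MarkovShift A) : MarkovShift A :=
  ⟨fun n => x.1 (n + 1), fun i => x.2 (i + 1)⟩

/-- The cylinder set determined by a finite word. -/
def cylinder (w : List ℕ) : Set (MarkovShift A) :=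
  {x | ∀ i : Fin w.length, x.1 i = w.get i}

/-- The cylinder set determined by the first `m` coordinates of `x`. -/
def cylOf (x : MarkovShift A) (m : ℕ) : Set (MarkovShift A) :=
  {y | ∀ i < m, y.1 i = x.1 i}

/-- A symbol is admissible when its cylinder is nonempty. -/
def Admissible (A : ℕ → ℕ → Bool) (a : ℕ) : Prop :=
  ∃ x : MarkovShift A, x.1 0 = a

/-- Topologically mixing. -/
def TopologicallyMixing (A : ℕ → ℕ → Bool) : Prop :=
  ∀ a b : ℕ, Admissible A a → Admissible A b →
    ∃ N : ℕ, ∀ n ≥ N, ∃ x : MarkovShift A, x.1 0 = a ∧ (shift^[n] x).1 0 = b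

/-- Finitely primitive (BIP). -/
def FinitelyPrimitive (A : ℕ → ℕ → Bool) : Prop :=
  ∃ (K₀ : ℕ) (F : Finset ℕ), ∀ a b : ℕ, Admissible A a → Admissible A b →
    ∃ w : List ℕ, w.length = K₀ ∧ (∀ c ∈ w, c ∈ F) ∧
      List.Chain' (fun u v => A u v = true) (a :: (w ++ [b]))

/-- First coordinate where two distinct points disagree. -/
noncomputable def firstDiff (x y : MarkovShift A) (h : x ≠ y) : ℕ :=
  Nat.find (Function.ne_iff.mp (fun hxy : x.1 = y.1 => h (Subtype.ext hxy)))

open Classical in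
/-- The metric `d(x,y) = r^{t(x,y)}`. -/
noncomputable def dist' (r : ℝ) (x y : MarkovShift A) : ℝ :=
  if h : x = y then 0 else r ^ firstDiff x y h

/-- Birkhoff sum `S_n f`. -/
def birkhoff (f : MarkovShift A → ℝ) (n : ℕ) (x : MarkovShift A) : ℝ :=
  ∑ j ∈ Finset.range n, f (shift^[j] x)

/-- The set of values `|S_n f x - S_n f y|` over pairs agreeing on the first `m` coordinates. -/
def varSet (f : MarkovShift A → ℝ) (n m : ℕ) : Set ℝ :=
  {c | ∃ x y : MarkovShift A, (∀ i < m, x.1 i = y.1 i) ∧ c = |birkhoff f n x - birkhoff f n y|}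

/-- `Var_m (S_n f)`. -/
noncomputable def varBirk (f : MarkovShift A → ℝ) (n m : ℕ) : ℝ := sSup (varSet f n m)

/-- `Var_1 f < ∞`. -/
def Var1Finite (f : MarkovShift A → ℝ) : Prop := BddAbove (varSet f 1 1)

/-- The set whose supremum is `sup_{n ≥ 1} Var_{n+k}(S_n f)`. -/
def waltersSet (f : MarkovShift A → ℝ) (k : ℕ) : Set ℝ :=
  {c | ∃ n, 1 ≤ n ∧ c ∈ varSet f n (n + k)}

/-- `M_k = sup_{n ≥ 1} Var_{n+k}(S_n f)`. -/
noncomputable def waltersSup (f : MarkovShift A → ℝ) (k : ℕ) : ℝ := sSup (waltersSet f k)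

/-- The Walters condition. -/
def SatisfiesWalters (f : MarkovShift A → ℝ) : Prop :=
  (∀ k, 1 ≤ k → BddAbove (waltersSet f k)) ∧
    Tendsto (fun k => waltersSup f k) atTop (𝓝 0)

/-- The partition function `Z_n(f,a) = Σ_{σ^n x = x, x₀ = a} e^{S_n f (x)}`. -/
noncomputable def partitionSum (f : MarkovShift A → ℝ) (n : ℕ) (a : ℕ) : ℝ :=
  ∑' x : {x : MarkovShift A // shift^[n] x = x ∧ x.1 0 = a}, Real.exp (birkhoff f n x.1)

/-- `f` has (finite) Gurevich pressure `p`. -/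
def HasGurevichPressure (f : MarkovShift A → ℝ) (p : ℝ) : Prop :=
  ∀ a : ℕ, Admissible A a →
    (∀ n, 1 ≤ n → Summable fun x : {x : MarkovShift A // shift^[n] x = x ∧ x.1 0 = a} =>
        Real.exp (birkhoff f n x.1)) ∧
    Tendsto (fun n : ℕ => (1 / (n : ℝ)) * Real.log (partitionSum f n a)) atTop (𝓝 p)

/-- σ-invariant Borel probability measure. -/
def IsInvariantProb (μ : Measure (MarkovShift A)) : Prop :=
  IsProbabilityMeasure μ ∧ μ.map shift = μ

/-- `m(f)`, the maximal ergodic average. -/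
noncomputable def mf (f : MarkovShift A → ℝ) : ℝ :=
  sSup {c | ∃ μ : Measure (MarkovShift A),
    IsInvariantProb μ ∧ Integrable f μ ∧ ∫ x, f x ∂μ = c}

/-- A maximizing measure for `f`. -/
def IsMaximizing (f : MarkovShift A → ℝ) (μ : Measure (MarkovShift A)) : Prop :=
  IsInvariantProb μ ∧ Integrable f μ ∧ ∫ x, f x ∂μ = mf f

/-- Bounded real valued function. -/
def BoundedFun (g : MarkovShift A → ℝ) : Prop := ∃ C, ∀ x, |g x| ≤ C

/-- A bounded calibrated sub-action for `f`. -/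
def IsCalibratedSubaction (f V : MarkovShift A → ℝ) : Prop :=
  Continuous V ∧ BoundedFun V ∧
    (∀ x, f x + V x - V (shift x) - mf f ≤ 0) ∧
    (∀ y, ∃ x, shift x = y ∧ f x + V x - V (shift x) - mf f = 0)

/-- The Ruelle transfer operator `(L_g u)(x) = Σ_{σ y = x} e^{g(y)} u(y)`. -/
noncomputable def ruelle (g u : MarkovShift A → ℝ) (x : MarkovShift A) : ℝ :=
  ∑' y : {y : MarkovShift A // shift y = x}, Real.exp (g y.1) * u y.1

/-- Ruelle-Perron-Frobenius data for the potential `f` with pressure `p`: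
eigenfunction `h`, eigenmeasure `ν`. -/
def IsRPF (f : MarkovShift A → ℝ) (p : ℝ) (h : MarkovShift A → ℝ)
    (ν : Measure (MarkovShift A)) : Prop :=
  Continuous h ∧ (∀ x, 0 < h x) ∧
    (∀ x, ruelle f h x = Real.exp p * h x) ∧
    IsProbabilityMeasure ν ∧
    (∀ g : MarkovShift A → ℝ, Continuous g → BoundedFun g →
      ∫ x, ruelle f g x ∂ν = Real.exp p * ∫ x, g x ∂ν) ∧
    ∫ x, h x ∂ν = 1

/-- The Gibbs measure `dμ = h dν`. -/
noncomputable def gibbs (h : MarkovShift A → ℝ) (ν : Measure (MarkovShift A)) :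
    Measure (MarkovShift A) :=
  ν.withDensity fun x => ENNReal.ofReal (h x)

/-- The Mañé potential `S_f(x,y)` (with respect to the metric of parameter `r`). -/
noncomputable def manePot (r : ℝ) (f : MarkovShift A → ℝ) (x y : MarkovShift A) : EReal :=
  ⨅ ε : {ε : ℝ // 0 < ε}, ⨆ n : {n : ℕ // 1 ≤ n},
    ⨆ _z : {z : MarkovShift A // dist' r x z < ε.1 ∧ shift^[n.1] z = y},
      ((birkhoff (fun w => f w - mf f) n.1 _z.1 : ℝ) : EReal)

/-- The (topological) support of a measure. -/
def msupport (μ : Measure (MarkovShift A)) : Set (MarkovShift A) :=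
  {x | ∀ U : Set (MarkovShift A), IsOpen U → x ∈ U → 0 < μ U}

end MarkovShift

namespace MarkovShift

section helpers

variable {A : ℕ → ℕ → Bool}

/-- `exp` valued in `ℝ≥0∞`. -/
noncomputable def ee (t : ℝ) : ℝ≥0∞ := ENNReal.ofReal (Real.exp t)

lemma ee_add (s t : ℝ) : ee (s + t) = ee s * ee t := by
  unfold ee
  rw [Real.exp_add, ENNReal.ofReal_mul (Real.exp_pos _).le]

lemma ee_mono {s t : ℝ} (h : s ≤ t) : ee s ≤ ee t :=
  ENNReal.ofReal_le_ofReal (Real.exp_le_exp.2 h)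

lemma ee_ne_top (t : ℝ) : ee t ≠ ⊤ := ENNReal.ofReal_ne_top

lemma ee_ne_zero (t : ℝ) : ee t ≠ 0 := by
  unfold ee
  simpa using Real.exp_pos t

lemma ee_zero : ee 0 = 1 := by simp [ee]

lemma measurable_ee : Measurable ee :=
  ENNReal.measurable_ofReal.comp Real.measurable_exp

lemma shift_iter_val (n : ℕ) (x : MarkovShift A) (i : ℕ) :
    (shift^[n] x).1 i = x.1 (i + n) := by
  induction n generalizing x with
  | zero => rfl
  | succ n ih =>
    rw [Function.iterate_succ_apply, ih]
    show x.1 (i + n + 1) = _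
    rfl

lemma birkhoff_succ_left (f : MarkovShift A → ℝ) (n : ℕ) (x : MarkovShift A) :
    birkhoff f (n + 1) x = f x + birkhoff f n (shift x) := by
  unfold birkhoff
  rw [Finset.sum_range_succ', add_comm]
  rfl

lemma birkhoff_add (f : MarkovShift A → ℝ) (n k : ℕ) (x : MarkovShift A) :
    birkhoff f (n + k) x = birkhoff f n x + birkhoff f k (shift^[n] x) := by
  unfold birkhoff
  rw [Finset.sum_range_add]
  congr 1
  refine Finset.sum_congr rfl fun j _ => ?_
  rw [← Function.iterate_add_apply, add_comm j n]

open Classical in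
/-- the iterated transfer operator on `ℝ≥0∞`-valued functions -/
noncomputable def Tn (ψ : MarkovShift A → ℝ) (n : ℕ) (g : MarkovShift A → ℝ≥0∞)
    (x : MarkovShift A) : ℝ≥0∞ :=
  ∑' y : MarkovShift A, if shift^[n] y = x then ee (birkhoff ψ n y) * g y else 0

lemma Tn_zero (ψ : MarkovShift A → ℝ) (g : MarkovShift A → ℝ≥0∞) : Tn ψ 0 g = g := by
  classical
  funext x
  unfold Tn
  rw [tsum_eq_single x]
  · simp [birkhoff, ee_zero]
  · intro y hy
    simp [hy]

lemma Tn_succ (ψ : MarkovShift A → ℝ) (n : ℕ) (g : MarkovShift A → ℝ≥0∞) :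
    Tn ψ (n + 1) g = Tn ψ n (Tn ψ 1 g) := by
  classical
  funext x
  unfold Tn
  have h1 : ∀ z : MarkovShift A,
      (if shift^[n] z = x then ee (birkhoff ψ n z) *
        ∑' y : MarkovShift A, (if shift^[1] y = z then ee (birkhoff ψ 1 y) * g y else 0) else 0)
      = ∑' y : MarkovShift A, if shift y = z then
          (if shift^[n] z = x then ee (birkhoff ψ n z) * (ee (ψ y) * g y) else 0) else 0 := by
    intro z
    split_ifs with hz
    · rw [← ENNReal.tsum_mul_left]
      refine tsum_congr fun y => ?_
      simp [birkhoff]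
    · simp
  rw [tsum_congr h1, ENNReal.tsum_comm]
  refine tsum_congr fun y => ?_
  rw [tsum_eq_single (shift y)]
  · rw [if_pos rfl, Function.iterate_succ_apply, birkhoff_succ_left, add_comm, ee_add, mul_assoc]
  · intro z hz
    rw [if_neg (Ne.symm hz)]

lemma Tn_fix {ψ : MarkovShift A → ℝ} {g : MarkovShift A → ℝ≥0∞} (h : Tn ψ 1 g = g) (n : ℕ) :
    Tn ψ n g = g := by
  induction n with
  | zero => exact Tn_zero ψ g
  | succ n ih => rw [Tn_succ, h, ih]

lemma Tn_mono (ψ : MarkovShift A → ℝ) (n : ℕ) {g k : MarkovShift A → ℝ≥0∞}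
    (h : ∀ x, g x ≤ k x) (x : MarkovShift A) : Tn ψ n g x ≤ Tn ψ n k x := by
  unfold Tn
  refine ENNReal.tsum_le_tsum fun y => ?_
  split_ifs
  · gcongr
    exact h y
  · rfl

lemma Tn_add (ψ : MarkovShift A → ℝ) (n : ℕ) (g k : MarkovShift A → ℝ≥0∞)
    (x : MarkovShift A) : Tn ψ n (fun y => g y + k y) x = Tn ψ n g x + Tn ψ n k x := by
  unfold Tn
  rw [← ENNReal.tsum_add]
  refine tsum_congr fun y => ?_
  split_ifs
  · rw [mul_add]
  · simp

lemma continuous_coord (i : ℕ) : Continuous fun x : MarkovShift A => x.1 i :=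
  (continuous_apply i).comp continuous_subtype_val

/-- Prepending a symbol (junk if not admissible). -/
def consT (a : ℕ) (x : MarkovShift A) : MarkovShift A :=
  if h : A a (x.1 0) = true then
    ⟨fun i => if i = 0 then a else x.1 (i - 1), by
      intro i
      cases i with
      | zero => simpa using h
      | succ i => simpa using x.2 i⟩
  else x

lemma consT_val {a : ℕ} {x : MarkovShift A} (h : A a (x.1 0) = true) (i : ℕ) :
    (consT a x).1 i = if i = 0 then a else x.1 (i - 1) :=
  congrFun (congrArg Subtype.val (dif_pos h)) i

lemma consT_neg {a : ℕ} {x : MarkovShift A} (h : ¬ A a (x.1 0) = true) :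
    consT a x = x := dif_neg h

lemma shift_consT {a : ℕ} {x : MarkovShift A} (h : A a (x.1 0) = true) :
    shift (consT a x) = x := by
  apply Subtype.ext
  funext i
  show (consT a x).1 (i + 1) = _
  rw [consT_val h]
  simp

lemma continuous_consT (a : ℕ) : Continuous (consT a : MarkovShift A → MarkovShift A) := by
  apply continuous_induced_rng.2
  apply continuous_pi
  intro i
  have : (fun x : MarkovShift A => (consT a x).1 i) =
      (fun p : ℕ × ℕ × ℕ => if A a p.1 = true then (if i = 0 then a else p.2.1) else p.2.2) ∘
      (fun x : MarkovShift A => (x.1 0, x.1 (i - 1), x.1 i)) := by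
    funext x
    simp only [Function.comp]
    split_ifs with h1 h2
    · rw [consT_val h1, if_pos h2]
    · rw [consT_val h1, if_neg h2]
    · rw [consT_neg h1]
  show Continuous (fun x : MarkovShift A => (consT a x).1 i)
  rw [this]
  exact continuous_of_discreteTopology.comp
    ((continuous_coord 0).prodMk ((continuous_coord (i - 1)).prodMk (continuous_coord i)))

lemma ext_of_shift {y z : MarkovShift A} (h0 : y.1 0 = z.1 0) (h : shift y = shift z) : y = z := by
  apply Subtype.ext
  funext i
  cases i with
  | zero => exact h0
  | succ i => exact congrFun (congrArg Subtype.val h) i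

lemma ext_of_shift_iter {y z : MarkovShift A} (n : ℕ) (h0 : ∀ i < n, y.1 i = z.1 i)
    (h : shift^[n] y = shift^[n] z) : y = z := by
  apply Subtype.ext
  funext i
  by_cases hi : i < n
  · exact h0 i hi
  · have := congrFun (congrArg Subtype.val h) (i - n)
    rw [shift_iter_val, shift_iter_val] at this
    rwa [Nat.sub_add_cancel (by omega)] at this

lemma Tn_one_eq (ψ : MarkovShift A → ℝ) (g : MarkovShift A → ℝ≥0∞) (x : MarkovShift A) :
    Tn ψ 1 g x = ∑' a : ℕ, {x : MarkovShift A | A a (x.1 0) = true}.indicator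
      (fun x => ee (ψ (consT a x)) * g (consT a x)) x := by
  classical
  unfold Tn
  have h1 : ∀ y : MarkovShift A,
      (if shift^[1] y = x then ee (birkhoff ψ 1 y) * g y else 0)
      = ∑' a : ℕ, if y.1 0 = a then (if shift y = x then ee (ψ y) * g y else 0) else 0 := by
    intro y
    rw [tsum_eq_single (y.1 0)]
    · simp [birkhoff]
    · intro a ha
      rw [if_neg (Ne.symm ha)]
  rw [tsum_congr h1, ENNReal.tsum_comm]
  refine tsum_congr fun a => ?_
  by_cases h : A a (x.1 0) = true
  · rw [Set.indicator_of_mem (by exact h), tsum_eq_single (consT a x)]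
    · rw [if_pos, if_pos (shift_consT h)]
      rw [consT_val h]; simp
    · intro y hy
      split_ifs with h2 h3
      · exfalso
        apply hy
        apply ext_of_shift
        · rw [consT_val h]; simpa using h2
        · rw [shift_consT h, h3]
      · rfl
      · rfl
  · rw [Set.indicator_of_notMem (by exact h)]
    rw [ENNReal.tsum_eq_zero]
    intro y
    split_ifs with h2 h3
    · exfalso
      apply h
      rw [← h2, ← h3]
      exact y.2 0
    · rfl
    · rfl

lemma measurableSet_adm (a : ℕ) : MeasurableSet {x : MarkovShift A | A a (x.1 0) = true} := by
  have : Measurable fun x : MarkovShift A => A a (x.1 0) :=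
    (measurable_of_countable (fun b => A a b)).comp (continuous_coord 0).measurable
  exact this (measurableSet_singleton true)

lemma measurable_Tn_one {ψ : MarkovShift A → ℝ} (hψ : Measurable ψ) {g : MarkovShift A → ℝ≥0∞}
    (hg : Measurable g) : Measurable (Tn ψ 1 g) := by
  rw [funext (Tn_one_eq ψ g)]
  refine Measurable.tsum fun a => Measurable.indicator ?_ (measurableSet_adm a)
  exact (measurable_ee.comp (hψ.comp (continuous_consT a).measurable)).mul
    (hg.comp (continuous_consT a).measurable)

/-- dual measure -/
noncomputable def dualMeas (ψ : MarkovShift A → ℝ) (ν : Measure (MarkovShift A)) :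
    Measure (MarkovShift A) :=
  Measure.sum fun a : ℕ =>
    (((ν.restrict {x : MarkovShift A | A a (x.1 0) = true}).withDensity
      fun x => ee (ψ (consT a x))).map (consT a))

lemma lintegral_dualMeas {ψ : MarkovShift A → ℝ} (hψ : Measurable ψ)
    (ν : Measure (MarkovShift A)) {g : MarkovShift A → ℝ≥0∞} (hg : Measurable g) :
    ∫⁻ x, g x ∂(dualMeas ψ ν) = ∫⁻ x, Tn ψ 1 g x ∂ν := by
  have hc : ∀ a, Measurable (consT a : MarkovShift A → MarkovShift A) :=
    fun a => (continuous_consT a).measurable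
  have hm : ∀ a, Measurable fun x : MarkovShift A => ee (ψ (consT a x)) :=
    fun a => measurable_ee.comp (hψ.comp (hc a))
  unfold dualMeas
  rw [lintegral_sum_measure, lintegral_congr (Tn_one_eq ψ g), lintegral_tsum]
  · refine tsum_congr fun a => ?_
    rw [lintegral_map hg (hc a)]
    refine (lintegral_withDensity_eq_lintegral_mul _ (hm a) (hg.comp (hc a))).trans ?_
    exact (lintegral_indicator (measurableSet_adm a) _).symm
  · intro a
    exact (((hm a).mul (hg.comp (hc a))).indicator (measurableSet_adm a)).aemeasurable

lemma lintegral_Tn {ψ : MarkovShift A → ℝ} (hψ : Measurable ψ)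
    {ν : Measure (MarkovShift A)}
    (hd : ∀ g : MarkovShift A → ℝ≥0∞, Measurable g → ∫⁻ x, Tn ψ 1 g x ∂ν = ∫⁻ x, g x ∂ν)
    (n : ℕ) {g : MarkovShift A → ℝ≥0∞} (hg : Measurable g) :
    ∫⁻ x, Tn ψ n g x ∂ν = ∫⁻ x, g x ∂ν := by
  induction n generalizing g with
  | zero => rw [Tn_zero]
  | succ n ih => rw [Tn_succ, ih (measurable_Tn_one hψ hg), hd g hg]

instance : TopologicalSpace.MetrizableSpace (MarkovShift A) :=
  (Topology.IsEmbedding.subtypeVal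
    (p := fun x : ℕ → ℕ => ∀ i, A (x i) (x (i + 1)) = true)).metrizableSpace

/-- first `n` symbols -/
def pref (n : ℕ) (z : MarkovShift A) : Fin n → ℕ := fun i => z.1 i

lemma pref_eq_iff {n : ℕ} {y z : MarkovShift A} : pref n y = pref n z ↔ ∀ i < n, y.1 i = z.1 i := by
  constructor
  · intro h i hi
    exact congrFun h ⟨i, hi⟩
  · intro h
    funext i
    exact h i i.2

lemma cylOf_eq (z : MarkovShift A) (n : ℕ) : cylOf z n = pref n ⁻¹' {pref n z} := by
  ext y
  exact pref_eq_iff.symm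

lemma continuous_pref (n : ℕ) : Continuous (pref n : MarkovShift A → Fin n → ℕ) :=
  continuous_pi fun i => continuous_coord (i : ℕ)

lemma measurable_pref (n : ℕ) : Measurable (pref n : MarkovShift A → Fin n → ℕ) :=
  (continuous_pref n).measurable

lemma measurableSet_cylOf (z : MarkovShift A) (n : ℕ) : MeasurableSet (cylOf z n) := by
  rw [cylOf_eq]
  exact measurable_pref n (measurableSet_singleton _)

lemma lintegral_pref (ν : Measure (MarkovShift A)) (n : ℕ) (G : (Fin n → ℕ) → ℝ≥0∞) :
    ∫⁻ z, G (pref n z) ∂ν = ∑' w : Fin n → ℕ, G w * ν (pref n ⁻¹' {w}) := by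
  rw [← lintegral_map (measurable_of_countable G) (measurable_pref n), lintegral_countable']
  refine tsum_congr fun w => ?_
  rw [Measure.map_apply (measurable_pref n) (measurableSet_singleton w)]

/-- cylinders form a neighbourhood basis -/
lemma exists_cyl_subset {U : Set (MarkovShift A)} (hU : IsOpen U) {z : MarkovShift A} (hz : z ∈ U) :
    ∃ n, ∀ y, pref n y = pref n z → y ∈ U := by
  by_contra hcon
  push Not at hcon
  choose y hy hyU using hcon
  have ht : Tendsto y atTop (𝓝 z) := by
    refine tendsto_subtype_rng.2 (tendsto_pi_nhds.2 fun i => ?_)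
    refine tendsto_const_nhds.congr' ?_
    filter_upwards [eventually_gt_atTop i] with n hn
    exact (pref_eq_iff.1 (hy n) i hn).symm
  obtain ⟨n, hn⟩ := (ht.eventually (hU.mem_nhds hz)).exists
  exact hyU n hn

/-- infimum over `n`-cylinders -/
noncomputable def infC (H : MarkovShift A → ℝ≥0∞) (n : ℕ) (w : Fin n → ℕ) : ℝ≥0∞ :=
  ⨅ y : MarkovShift A, ⨅ _ : pref n y = w, H y

lemma infC_le (H : MarkovShift A → ℝ≥0∞) (n : ℕ) (y : MarkovShift A) :
    infC H n (pref n y) ≤ H y :=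
  iInf₂_le (f := fun (z : MarkovShift A) (_ : pref n z = pref n y) => H z) y rfl

lemma infC_mono (H : MarkovShift A → ℝ≥0∞) (z : MarkovShift A) :
    Monotone fun n => infC H n (pref n z) := by
  intro n m hnm
  refine le_iInf₂ fun y hy => iInf₂_le y ?_
  rw [pref_eq_iff] at hy ⊢
  exact fun i hi => hy i (lt_of_lt_of_le hi hnm)

lemma iSup_infC {H : MarkovShift A → ℝ≥0∞} (hH : Continuous H) (z : MarkovShift A) :
    ⨆ n, infC H n (pref n z) = H z := by
  apply le_antisymm (iSup_le fun n => infC_le H n z)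
  refine le_of_forall_lt fun c hc => ?_
  obtain ⟨c', hcc, hc'⟩ := exists_between hc
  obtain ⟨n, hn⟩ := exists_cyl_subset (isOpen_Ioi.preimage hH) (show z ∈ H ⁻¹' Set.Ioi c' from hc')
  refine lt_of_lt_of_le hcc (le_trans ?_ (le_iSup _ n))
  exact le_iInf₂ fun y hy => (hn y hy).le

section abstract

variable {ψ : MarkovShift A → ℝ} {ν : Measure (MarkovShift A)} {c d : ℝ} {K : ℕ}

lemma nu_upper (hψ : Measurable ψ) [IsProbabilityMeasure ν]
    (hd : ∀ g : MarkovShift A → ℝ≥0∞, Measurable g → ∫⁻ x, Tn ψ 1 g x ∂ν = ∫⁻ x, g x ∂ν)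
    (hc : ∀ n, 1 ≤ n → ∀ y z : MarkovShift A, pref n y = pref n z →
      birkhoff ψ n y ≤ birkhoff ψ n z + c)
    (z : MarkovShift A) (n : ℕ) (hn : 1 ≤ n) :
    ν (cylOf z n) ≤ ee (birkhoff ψ n z + c) := by
  classical
  rw [← lintegral_indicator_one (measurableSet_cylOf z n),
    ← lintegral_Tn hψ hd n (measurable_one.indicator (measurableSet_cylOf z n))]
  have : ∀ x, Tn ψ n ((cylOf z n).indicator 1) x ≤ ee (birkhoff ψ n z + c) := by
    intro x
    unfold Tn
    by_cases hex : ∃ y ∈ cylOf z n, shift^[n] y = x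
    · obtain ⟨y, hy, hyx⟩ := hex
      rw [tsum_eq_single y]
      · rw [if_pos hyx, Set.indicator_of_mem hy]
        simpa using ee_mono (hc n hn y z (pref_eq_iff.2 hy))
      · intro y' hy'
        split_ifs with h1
        · rw [Set.indicator_of_notMem, mul_zero]
          intro h2
          apply hy'
          refine ext_of_shift_iter n (fun i hi => ?_) (h1.trans hyx.symm)
          rw [h2 i hi, hy i hi]
        · rfl
    · push Not at hex
      rw [ENNReal.tsum_eq_zero.2]
      · exact zero_le
      · intro y
        split_ifs with h1
        · rw [Set.indicator_of_notMem, mul_zero]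
          exact fun h2 => hex y h2 h1
        · rfl
  calc _ ≤ ∫⁻ _, ee (birkhoff ψ n z + c) ∂ν := lintegral_mono this
    _ = _ := by simp

lemma nu_lower (hψ : Measurable ψ) [IsProbabilityMeasure ν]
    (hd : ∀ g : MarkovShift A → ℝ≥0∞, Measurable g → ∫⁻ x, Tn ψ 1 g x ∂ν = ∫⁻ x, g x ∂ν)
    (hg : ∀ n, 1 ≤ n → ∀ z x : MarkovShift A, ∃ y, pref n y = pref n z ∧ shift^[n + K] y = x ∧
      birkhoff ψ n z - d ≤ birkhoff ψ (n + K) y)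
    (z : MarkovShift A) (n : ℕ) (hn : 1 ≤ n) :
    ee (birkhoff ψ n z - d) ≤ ν (cylOf z n) := by
  classical
  rw [← lintegral_indicator_one (measurableSet_cylOf z n),
    ← lintegral_Tn hψ hd (n + K) (measurable_one.indicator (measurableSet_cylOf z n))]
  have : ∀ x, ee (birkhoff ψ n z - d) ≤ Tn ψ (n + K) ((cylOf z n).indicator 1) x := by
    intro x
    obtain ⟨y, hy, hyx, hb⟩ := hg n hn z x
    unfold Tn
    refine le_trans ?_ (ENNReal.le_tsum y)
    rw [if_pos hyx, Set.indicator_of_mem (show y ∈ cylOf z n from pref_eq_iff.1 hy)]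
    simpa using ee_mono hb
  calc _ = ∫⁻ _, ee (birkhoff ψ n z - d) ∂ν := by simp
    _ ≤ _ := lintegral_mono this

lemma h_lower_n {H : MarkovShift A → ℝ≥0∞} (hH : Tn ψ 1 H = H)
    (hup : ∀ (z : MarkovShift A) (n : ℕ), 1 ≤ n → ν (cylOf z n) ≤ ee (birkhoff ψ n z + c))
    (hg : ∀ n, 1 ≤ n → ∀ z x : MarkovShift A, ∃ y, pref n y = pref n z ∧ shift^[n + K] y = x ∧
      birkhoff ψ n z - d ≤ birkhoff ψ (n + K) y)
    (x : MarkovShift A) (n : ℕ) (hn : 1 ≤ n) :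
    ∫⁻ z, infC H n (pref n z) ∂ν ≤ ee (c + d) * H x := by
  classical
  choose y hy1 hy2 hy3 using hg n hn
  have hx : H x = Tn ψ (n + K) H x := by rw [Tn_fix hH]
  rw [lintegral_pref, hx]
  unfold Tn
  rw [← ENNReal.tsum_mul_left]
  -- choose representatives
  let R : Set (Fin n → ℕ) := Set.range (pref n : MarkovShift A → Fin n → ℕ)
  have hsupp : Function.support (fun w : Fin n → ℕ =>
      infC H n w * ν (pref n ⁻¹' {w})) ⊆ R := by
    intro w hw
    by_contra hwR
    apply hw
    have : pref n ⁻¹' {w} = (∅ : Set (MarkovShift A)) := by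
      ext z
      simp only [Set.mem_preimage, Set.mem_singleton_iff, Set.mem_empty_iff_false, iff_false]
      exact fun h => hwR ⟨z, h⟩
    simp [this]
  have hsw := tsum_subtype_eq_of_support_subset hsupp
  rw [← hsw]
  have hrep : ∀ w : R, ∃ z : MarkovShift A, pref n z = w := fun w => w.2
  choose rep hrepw using hrep
  let yy : R → MarkovShift A := fun w => y (rep w) x
  have hyyw : ∀ w, pref n (yy w) = w := fun w => (hy1 _ _).trans (hrepw w)
  have hinj : Function.Injective yy := by
    intro w w' h
    apply Subtype.ext
    rw [← hyyw w, ← hyyw w', h]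
  refine le_trans ?_ (ENNReal.tsum_comp_le_tsum_of_injective hinj _)
  refine ENNReal.tsum_le_tsum fun w => ?_
  rw [if_pos (hy2 (rep w) x)]
  have h1 : infC H n w ≤ H (yy w) := by
    have := infC_le H n (yy w)
    rwa [hyyw] at this
  have h2 : ν (pref n ⁻¹' {(w : Fin n → ℕ)}) ≤ ee (c + d) * ee (birkhoff ψ (n + K) (yy w)) := by
    rw [← hrepw w, ← cylOf_eq, ← ee_add]
    refine (hup _ n hn).trans (ee_mono ?_)
    have := hy3 (rep w) x
    show _ ≤ _ + birkhoff ψ (n + K) (y (rep w) x)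
    linarith
  calc _ ≤ H (yy w) * (ee (c + d) * ee (birkhoff ψ (n + K) (yy w))) := mul_le_mul' h1 h2
    _ = _ := by
      show _ = ee (c + d) * (ee (birkhoff ψ (n + K) (yy w)) * H (yy w))
      ring

lemma measurable_infC (H : MarkovShift A → ℝ≥0∞) (n : ℕ) :
    Measurable fun z : MarkovShift A => infC H n (pref n z) :=
  (measurable_of_countable (infC H n)).comp (measurable_pref n)

lemma lintegral_iSup_infC {H : MarkovShift A → ℝ≥0∞} (hHc : Continuous H) :
    ⨆ n, ∫⁻ z, infC H n (pref n z) ∂ν = ∫⁻ z, H z ∂ν := by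
  rw [← lintegral_iSup (fun n => measurable_infC H n)]
  · exact lintegral_congr fun z => iSup_infC hHc z
  · exact fun n m hnm z => infC_mono H z hnm

lemma h_lower {H : MarkovShift A → ℝ≥0∞} (hHc : Continuous H) (hH : Tn ψ 1 H = H)
    (hH1 : ∫⁻ z, H z ∂ν = 1)
    (hup : ∀ (z : MarkovShift A) (n : ℕ), 1 ≤ n → ν (cylOf z n) ≤ ee (birkhoff ψ n z + c))
    (hg : ∀ n, 1 ≤ n → ∀ z x : MarkovShift A, ∃ y, pref n y = pref n z ∧ shift^[n + K] y = x ∧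
      birkhoff ψ n z - d ≤ birkhoff ψ (n + K) y)
    (x : MarkovShift A) : 1 ≤ ee (c + d) * H x := by
  rw [← hH1, ← lintegral_iSup_infC hHc]
  refine iSup_le fun n => ?_
  refine le_trans ?_ (h_lower_n hH hup hg x (n + 1) (by omega))
  exact lintegral_mono fun z => infC_mono H z (Nat.le_succ n)

lemma Tn_infC_le {H : MarkovShift A → ℝ≥0∞} (hH1 : ∫⁻ z, H z ∂ν = 1)
    (hlow : ∀ (z : MarkovShift A) (n : ℕ), 1 ≤ n → ee (birkhoff ψ n z - d) ≤ ν (cylOf z n))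
    (x : MarkovShift A) (n : ℕ) (hn : 1 ≤ n) :
    Tn ψ n (fun z => infC H n (pref n z)) x ≤ ee d := by
  classical
  have hle : ∫⁻ z, infC H n (pref n z) ∂ν ≤ 1 := by
    rw [← hH1]
    exact lintegral_mono fun z => infC_le H n z
  have hT : Tn ψ n (fun z => infC H n (pref n z)) x
      = ∑' y : {y : MarkovShift A // shift^[n] y = x},
        ee (birkhoff ψ n y.1) * infC H n (pref n y.1) := by
    unfold Tn
    refine Eq.trans ?_ (tsum_subtype {y : MarkovShift A | shift^[n] y = x}
      (fun y => ee (birkhoff ψ n y) * infC H n (pref n y))).symm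
    refine tsum_congr fun y => ?_
    rfl
  rw [hT]
  have hinj : Function.Injective
      fun y : {y : MarkovShift A // shift^[n] y = x} => pref n y.1 := by
    intro y y' h
    apply Subtype.ext
    exact ext_of_shift_iter n (pref_eq_iff.1 h) (y.2.trans y'.2.symm)
  calc _ ≤ ∑' y : {y : MarkovShift A // shift^[n] y = x},
        ee d * (infC H n (pref n y.1) * ν (pref n ⁻¹' {pref n y.1})) := by
        refine ENNReal.tsum_le_tsum fun y => ?_
        have h1 : ee (birkhoff ψ n y.1) ≤ ee d * ν (pref n ⁻¹' {pref n y.1}) := by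
          rw [← cylOf_eq]
          calc _ = ee d * ee (birkhoff ψ n y.1 - d) := by rw [← ee_add]; congr 1; ring
            _ ≤ _ := by gcongr; exact hlow _ n hn
        calc _ ≤ ee d * ν (pref n ⁻¹' {pref n y.1}) * infC H n (pref n y.1) := by gcongr
          _ = _ := by ring
    _ = ee d * ∑' y : {y : MarkovShift A // shift^[n] y = x},
        (infC H n (pref n y.1) * ν (pref n ⁻¹' {pref n y.1})) := ENNReal.tsum_mul_left
    _ ≤ ee d * ∑' w : Fin n → ℕ, (infC H n w * ν (pref n ⁻¹' {w})) := by
        gcongr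
        exact ENNReal.tsum_comp_le_tsum_of_injective hinj
          (fun w : Fin n → ℕ => infC H n w * ν (pref n ⁻¹' {w}))
    _ = ee d * ∫⁻ z, infC H n (pref n z) ∂ν := by rw [lintegral_pref]
    _ ≤ ee d * 1 := by gcongr
    _ = ee d := mul_one _

lemma mu_upper (hψ : Measurable ψ) {H : MarkovShift A → ℝ≥0∞} (hHc : Continuous H)
    (hH : Tn ψ 1 H = H) (hH1 : ∫⁻ z, H z ∂ν = 1)
    (hd : ∀ g : MarkovShift A → ℝ≥0∞, Measurable g → ∫⁻ x, Tn ψ 1 g x ∂ν = ∫⁻ x, g x ∂ν)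
    (hlow : ∀ (z : MarkovShift A) (n : ℕ), 1 ≤ n → ee (birkhoff ψ n z - d) ≤ ν (cylOf z n))
    (B : Set (MarkovShift A)) :
    ∫⁻ z in B, H z ∂ν ≤ ee d * ν B := by
  have key : ∀ n, 1 ≤ n → ∫⁻ z in B, H z ∂ν ≤ ee d * ν B +
      (1 - ∫⁻ z, infC H n (pref n z) ∂ν) := by
    intro n hn
    set D : MarkovShift A → ℝ≥0∞ := fun z => H z - infC H n (pref n z) with hD
    have hDm : Measurable D := hHc.measurable.sub (measurable_infC H n)
    have hHs : H = fun z => infC H n (pref n z) + D z := by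
      funext z
      exact (add_tsub_cancel_of_le (infC_le H n z)).symm
    have hle : ∫⁻ z, infC H n (pref n z) ∂ν ≤ 1 := by
      rw [← hH1]
      exact lintegral_mono fun z => infC_le H n z
    have hDint : ∫⁻ z, D z ∂ν = 1 - ∫⁻ z, infC H n (pref n z) ∂ν := by
      rw [← hH1]
      refine lintegral_sub (measurable_infC H n) ?_ ?_
      · exact ne_top_of_le_ne_top ENNReal.one_ne_top hle
      · exact Eventually.of_forall fun z => infC_le H n z
    have hpt : ∀ x, H x ≤ ee d + Tn ψ n D x := by
      intro x
      calc H x = Tn ψ n H x := by rw [Tn_fix hH]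
        _ = Tn ψ n (fun z => infC H n (pref n z) + D z) x := congrArg (fun G => Tn ψ n G x) hHs
        _ = Tn ψ n (fun z => infC H n (pref n z)) x + Tn ψ n D x := Tn_add ψ n _ _ x
        _ ≤ _ := by gcongr; exact Tn_infC_le hH1 hlow x n hn
    calc ∫⁻ z in B, H z ∂ν ≤ ∫⁻ z in B, (ee d + Tn ψ n D z) ∂ν := lintegral_mono hpt
      _ = ee d * ν B + ∫⁻ z in B, Tn ψ n D z ∂ν := by
        rw [lintegral_add_left measurable_const]; simp
      _ ≤ ee d * ν B + ∫⁻ z, Tn ψ n D z ∂ν := by gcongr; exact Measure.restrict_le_self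
      _ = _ := by rw [lintegral_Tn hψ hd n hDm, hDint]
  have hmono : Monotone fun n => ∫⁻ z, infC H n (pref n z) ∂ν :=
    fun n m hnm => lintegral_mono fun z => infC_mono H z hnm
  have ht : Tendsto (fun n => ∫⁻ z, infC H n (pref n z) ∂ν) atTop (𝓝 1) := by
    rw [← hH1, ← lintegral_iSup_infC hHc]
    exact tendsto_atTop_iSup hmono
  have ht2 : Tendsto (fun n => ee d * ν B + (1 - ∫⁻ z, infC H n (pref n z) ∂ν)) atTop
      (𝓝 (ee d * ν B + (1 - 1))) :=
    tendsto_const_nhds.add (ENNReal.Tendsto.sub tendsto_const_nhds ht (Or.inl ENNReal.one_ne_top))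
  have := ge_of_tendsto ht2 (by
    filter_upwards [eventually_ge_atTop 1] with n hn using key n hn)
  simpa using this

lemma abstract_gibbs (hψ : Measurable ψ) [IsProbabilityMeasure ν]
    {H : MarkovShift A → ℝ≥0∞} (hHc : Continuous H)
    (hH : Tn ψ 1 H = H) (hH1 : ∫⁻ z, H z ∂ν = 1)
    (hd : ∀ g : MarkovShift A → ℝ≥0∞, Measurable g → ∫⁻ x, Tn ψ 1 g x ∂ν = ∫⁻ x, g x ∂ν)
    (hc : ∀ n, 1 ≤ n → ∀ y z : MarkovShift A, pref n y = pref n z →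
      birkhoff ψ n y ≤ birkhoff ψ n z + c)
    (hg : ∀ n, 1 ≤ n → ∀ z x : MarkovShift A, ∃ y, pref n y = pref n z ∧ shift^[n + K] y = x ∧
      birkhoff ψ n z - d ≤ birkhoff ψ (n + K) y)
    (z : MarkovShift A) (n : ℕ) (hn : 1 ≤ n) :
    ee (birkhoff ψ n z - (c + d + d)) ≤ ∫⁻ x in cylOf z n, H x ∂ν ∧
    ∫⁻ x in cylOf z n, H x ∂ν ≤ ee (birkhoff ψ n z + (c + d)) := by
  have hup := nu_upper hψ hd hc
  have hlow := nu_lower hψ hd hg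
  constructor
  · have hl : ∀ x, ee (-(c + d)) ≤ H x := by
      intro x
      calc ee (-(c + d)) = ee (-(c + d)) * 1 := (mul_one _).symm
        _ ≤ ee (-(c + d)) * (ee (c + d) * H x) := by
          gcongr; exact h_lower hHc hH hH1 hup hg x
        _ = H x := by rw [← mul_assoc, ← ee_add, neg_add_cancel, ee_zero, one_mul]
    calc _ = ee (-(c + d)) * ee (birkhoff ψ n z - d) := by rw [← ee_add]; congr 1; ring
      _ ≤ ee (-(c + d)) * ν (cylOf z n) := by gcongr; exact hlow z n hn
      _ = ∫⁻ x in cylOf z n, ee (-(c + d)) ∂ν := by simp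
      _ ≤ _ := lintegral_mono hl
  · calc _ ≤ ee d * ν (cylOf z n) := mu_upper hψ hHc hH hH1 hd hlow _
      _ ≤ ee d * ee (birkhoff ψ n z + c) := by gcongr; exact hup z n hn
      _ = _ := by rw [← ee_add]; congr 1; ring

end abstract

lemma walters_bound {f : MarkovShift A → ℝ} (hW : SatisfiesWalters f) (hV : Var1Finite f) :
    ∃ C : ℝ, 0 ≤ C ∧ ∀ n, 1 ≤ n → ∀ y z : MarkovShift A, pref n y = pref n z →
      birkhoff f n y ≤ birkhoff f n z + C := by
  obtain ⟨C1, hC1⟩ := hW.1 1 le_rfl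
  obtain ⟨C2, hC2⟩ := hV
  have hf1 : ∀ y z : MarkovShift A, y.1 0 = z.1 0 → birkhoff f 1 y ≤ birkhoff f 1 z + C2 := by
    intro y z hyz
    have := hC2 ⟨y, z, fun i hi => by obtain rfl : i = 0 := by omega
                                      exact hyz, rfl⟩
    have := (abs_le.1 this).2
    linarith
  refine ⟨max C1 0 + max C2 0, by positivity, ?_⟩
  intro n hn y z hyz
  rw [pref_eq_iff] at hyz
  have m1 := le_max_left C1 0
  have m1' := le_max_right C1 0
  have m2 := le_max_left C2 0
  obtain ⟨k, rfl⟩ : ∃ k, n = k + 1 := ⟨n - 1, by omega⟩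
  rw [birkhoff_add, birkhoff_add]
  have h2 := hf1 (shift^[k] y) (shift^[k] z) (by
    rw [shift_iter_val, shift_iter_val]; exact hyz _ (by omega))
  rcases Nat.eq_zero_or_pos k with rfl | hk
  · simp only [birkhoff, Finset.range_zero, Finset.sum_empty] at *
    linarith
  · have := hC1 ⟨k, hk, y, z, hyz, rfl⟩
    have := (abs_le.1 this).2
    linarith

lemma continuous_of_walters {f : MarkovShift A → ℝ} (hW : SatisfiesWalters f) : Continuous f := by
  rw [continuous_iff_continuousAt]
  intro z
  rw [ContinuousAt, Metric.tendsto_nhds]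
  intro ε hε
  obtain ⟨k, hk, hk1⟩ := ((hW.2.eventually (gt_mem_nhds hε)).and (eventually_ge_atTop 1)).exists
  have hopen : IsOpen (pref (1 + k) ⁻¹' {pref (1 + k) z} : Set (MarkovShift A)) :=
    (isOpen_discrete {pref (1 + k) z}).preimage (continuous_pref (1 + k))
  filter_upwards [hopen.mem_nhds rfl] with y hy
  have : |birkhoff f 1 y - birkhoff f 1 z| ≤ waltersSup f k :=
    le_csSup (hW.1 k hk1) ⟨1, le_rfl, y, z, pref_eq_iff.1 hy, rfl⟩
  simp only [birkhoff, Finset.sum_range_one, Function.iterate_zero, id] at this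
  rw [Real.dist_eq]
  exact lt_of_le_of_lt this hk

lemma var1_bound {f : MarkovShift A → ℝ} (hV : Var1Finite f) :
    ∃ V : ℝ, ∀ y z : MarkovShift A, y.1 0 = z.1 0 → f y ≤ f z + V := by
  obtain ⟨C2, hC2⟩ := hV
  refine ⟨C2, fun y z hyz => ?_⟩
  have := hC2 ⟨y, z, fun i hi => by obtain rfl : i = 0 := by omega
                                    exact hyz, rfl⟩
  have := (abs_le.1 this).2
  simp only [birkhoff, Finset.sum_range_one, Function.iterate_zero, id] at this
  linarith

lemma lower_on_finset {f : MarkovShift A → ℝ} (hV : Var1Finite f) (F : Finset ℕ) :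
    ∃ B : ℝ, 0 ≤ B ∧ ∀ y : MarkovShift A, y.1 0 ∈ F → -B ≤ f y := by
  obtain ⟨V, hV⟩ := var1_bound hV
  have h1 : ∀ c : ℕ, ∃ b : ℝ, ∀ y : MarkovShift A, y.1 0 = c → -b ≤ f y := by
    intro c
    by_cases h : ∃ z : MarkovShift A, z.1 0 = c
    · obtain ⟨z, hz⟩ := h
      refine ⟨V - f z, fun y hy => ?_⟩
      have := hV z y (hz.trans hy.symm)
      linarith
    · exact ⟨0, fun y hy => (h ⟨y, hy⟩).elim⟩
  choose b hb using h1
  refine ⟨∑ c ∈ F, |b c|, Finset.sum_nonneg fun _ _ => abs_nonneg _, fun y hy => ?_⟩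
  have h2 := Finset.single_le_sum (f := fun c => |b c|) (fun _ _ => abs_nonneg _) hy
  have h3 := hb _ y rfl
  have h4 := le_abs_self (b (y.1 0))
  linarith

lemma birkhoff_lower {f : MarkovShift A → ℝ} {F : Finset ℕ} {B : ℝ}
    (hB : ∀ y : MarkovShift A, y.1 0 ∈ F → -B ≤ f y) (k : ℕ) (y : MarkovShift A)
    (hy : ∀ i < k, y.1 i ∈ F) : -(k * B) ≤ birkhoff f k y := by
  unfold birkhoff
  calc -(k * B) = ∑ _j ∈ Finset.range k, (-B) := by simp
    _ ≤ _ := Finset.sum_le_sum fun j hj => hB _ (by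
      rw [shift_iter_val, zero_add]
      exact hy j (Finset.mem_range.1 hj))

/-- BIP, with paths as functions -/
lemma bip_path {K : ℕ} {F : Finset ℕ} {a b : ℕ}
    (h : ∃ w : List ℕ, w.length = K ∧ (∀ c ∈ w, c ∈ F) ∧
      List.Chain' (fun u v => A u v = true) (a :: (w ++ [b]))) :
    ∃ p : ℕ → ℕ, p 0 = a ∧ p (K + 1) = b ∧ (∀ i ≤ K, A (p i) (p (i + 1)) = true) ∧
      ∀ i, 1 ≤ i → i ≤ K → p i ∈ F := by
  obtain ⟨w, hw, hF, hch⟩ := h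
  refine ⟨fun i => (a :: (w ++ [b])).getD i 0, rfl, ?_, ?_, ?_⟩
  · simp [List.getD, ← hw]
  · intro i hi
    have hch' := List.isChain_iff_getElem.1 hch i (by simp; omega)
    simp only [List.getD]
    rw [List.getElem?_eq_getElem (by simp; omega), List.getElem?_eq_getElem (by simp; omega)]
    exact hch'
  · intro i hi hiK
    obtain ⟨j, rfl⟩ : ∃ j, i = j + 1 := ⟨i - 1, by omega⟩
    have hj : j < w.length := by omega
    apply hF
    simp [List.getD, List.getElem?_append_left hj, List.getElem?_eq_getElem hj]

lemma glue_point {K : ℕ} {F : Finset ℕ}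
    (hK : ∀ a b : ℕ, Admissible A a → Admissible A b →
      ∃ p : ℕ → ℕ, p 0 = a ∧ p (K + 1) = b ∧ (∀ i ≤ K, A (p i) (p (i + 1)) = true) ∧
      ∀ i, 1 ≤ i → i ≤ K → p i ∈ F) (n : ℕ) (hn : 1 ≤ n) (z x : MarkovShift A) :
    ∃ y : MarkovShift A, pref n y = pref n z ∧ shift^[n + K] y = x ∧
      ∀ i < K, (shift^[n] y).1 i ∈ F := by
  have ha : Admissible A (z.1 (n - 1)) := ⟨shift^[n - 1] z, by rw [shift_iter_val, zero_add]⟩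
  obtain ⟨p, hp0, hp1, hpA, hpF⟩ := hK _ _ ha ⟨x, rfl⟩
  set g : ℕ → ℕ := fun i => if i < n then z.1 i else if i < n + K then p (i + 1 - n)
    else x.1 (i - n - K) with hgdef
  have g1 : ∀ i, i < n → g i = z.1 i := fun i hi => if_pos hi
  have g3 : ∀ i, g (i + (n + K)) = x.1 i := by
    intro i
    simp only [hgdef]
    rw [if_neg (by omega), if_neg (by omega)]
    rw [show i + (n + K) - n - K = i by omega]
  have g2 : ∀ i, n ≤ i + 1 → i ≤ n + K → g i = p (i + 1 - n) := by
    intro i h1 h2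
    by_cases h : i < n
    · rw [g1 i h]
      obtain rfl : i = n - 1 := by omega
      rw [← hp0]; congr 1; omega
    · by_cases h' : i < n + K
      · simp only [hgdef]
        rw [if_neg h, if_pos h']
      · obtain rfl : i = n + K := by omega
        have := g3 0
        rw [zero_add] at this
        rw [this, ← hp1]; congr 1; omega
  refine ⟨⟨g, ?_⟩, ?_, ?_, ?_⟩
  · intro i
    by_cases h1 : i + 1 < n
    · rw [g1 i (by omega), g1 _ h1]; exact z.2 i
    · by_cases h2 : i < n + K
      · rw [g2 i (by omega) (by omega), g2 (i + 1) (by omega) (by omega)]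
        have := hpA (i + 1 - n) (by omega)
        rwa [show i + 1 - n + 1 = i + 1 + 1 - n by omega] at this
      · obtain ⟨j, rfl⟩ : ∃ j, i = j + (n + K) := ⟨i - (n + K), by omega⟩
        rw [g3, show j + (n + K) + 1 = (j + 1) + (n + K) by omega, g3]
        exact x.2 j
  · exact pref_eq_iff.2 g1
  · apply Subtype.ext
    funext i
    exact (shift_iter_val _ _ _).trans (g3 i)
  · intro i hi
    have hgi : g (i + n) ∈ F := by
      rw [g2 _ (by omega) (by omega)]
      exact hpF _ (by omega) (by omega)
    exact (shift_iter_val n (⟨g, _⟩ : MarkovShift A) i).symm ▸ hgi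

lemma periodic_point {K : ℕ} {F : Finset ℕ}
    (hK : ∀ a b : ℕ, Admissible A a → Admissible A b →
      ∃ p : ℕ → ℕ, p 0 = a ∧ p (K + 1) = b ∧ (∀ i ≤ K, A (p i) (p (i + 1)) = true) ∧
      ∀ i, 1 ≤ i → i ≤ K → p i ∈ F) (a b : ℕ) (ha : Admissible A a) (hb : Admissible A b) :
    ∃ y : MarkovShift A, shift^[(K + 1) + (1 + K)] y = y ∧ y.1 0 = a ∧ y.1 (K + 1) = b ∧
      (∀ i, i < K + 1 → y.1 i ∈ insert a F) ∧
      (∀ i, i < K → y.1 (i + (K + 1 + 1)) ∈ insert a F) := by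
  obtain ⟨p, hp0, hp1, hpA, hpF⟩ := hK a b ha hb
  obtain ⟨r, hr0, hr1, hrA, hrF⟩ := hK b a hb ha
  set N := (K + 1) + (1 + K) with hN
  set w : ℕ → ℕ := fun i => if i ≤ K + 1 then p i else r (i - (K + 1)) with hw
  have w1 : ∀ i, i ≤ K + 1 → w i = p i := fun i hi => if_pos hi
  have w2 : ∀ i, K + 1 ≤ i → w i = r (i - (K + 1)) := by
    intro i hi
    by_cases h : i ≤ K + 1
    · obtain rfl : i = K + 1 := by omega
      rw [w1 _ le_rfl, hp1, Nat.sub_self, hr0]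
    · exact if_neg h
  have wA : ∀ i, i < N → A (w i) (w (i + 1)) = true := by
    intro i hi
    by_cases h : i ≤ K
    · rw [w1 i (by omega), w1 (i + 1) (by omega)]; exact hpA i h
    · rw [w2 i (by omega), w2 (i + 1) (by omega),
        show i + 1 - (K + 1) = i - (K + 1) + 1 by omega]
      exact hrA _ (by omega)
  have wN : w N = w 0 := by
    rw [w2 N (by omega), w1 0 (by omega), hp0, ← hr1]; congr 1; omega
  have hNpos : 0 < N := by omega
  refine ⟨⟨fun i => w (i % N), ?_⟩, ?_, ?_, ?_, ?_, ?_⟩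
  · intro i
    have hlt := Nat.mod_lt i hNpos
    have h1 := wA (i % N) hlt
    show A (w (i % N)) (w ((i + 1) % N)) = true
    by_cases h : i % N + 1 < N
    · rwa [Nat.add_mod_of_add_mod_lt (by rw [Nat.mod_eq_of_lt (a := 1) (by omega)]; exact h),
        Nat.mod_eq_of_lt (a := 1) (by omega)]
    · have h2 : i % N + 1 = N := by omega
      have h3 : (i + 1) % N = 0 := by
        rw [Nat.add_mod, Nat.mod_eq_of_lt (a := 1) (by omega), h2, Nat.mod_self]
      rw [h3, ← wN]
      rwa [h2] at h1
  · apply Subtype.ext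
    funext i
    refine (shift_iter_val _ _ _).trans ?_
    show w ((i + N) % N) = w (i % N)
    rw [Nat.add_mod_right]
  · show w (0 % N) = a
    rw [Nat.zero_mod, w1 0 (by omega), hp0]
  · show w ((K + 1) % N) = b
    rw [Nat.mod_eq_of_lt (by omega), w1 _ le_rfl, hp1]
  · intro i hi
    show w (i % N) ∈ _
    rw [Nat.mod_eq_of_lt (by omega), w1 i (by omega)]
    rcases Nat.eq_zero_or_pos i with rfl | hpos
    · rw [hp0]; exact Finset.mem_insert_self _ _
    · exact Finset.mem_insert_of_mem (hpF i hpos (by omega))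
  · intro i hi
    show w ((i + (K + 1 + 1)) % N) ∈ _
    rw [Nat.mod_eq_of_lt (by omega), w2 _ (by omega)]
    exact Finset.mem_insert_of_mem (hrF _ (by omega) (by omega))

lemma Tn_one_subtype (ψ : MarkovShift A → ℝ) (g : MarkovShift A → ℝ≥0∞) (x : MarkovShift A) :
    Tn ψ 1 g x = ∑' y : {y : MarkovShift A // shift y = x}, ee (ψ y.1) * g y.1 := by
  classical
  unfold Tn
  refine Eq.trans ?_ (tsum_subtype {y : MarkovShift A | shift y = x}
    (fun y => ee (ψ y) * g y)).symm
  refine tsum_congr fun y => ?_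
  simp only [Set.indicator, birkhoff, Finset.sum_range_one, Function.iterate_zero,
    Function.iterate_one, id, Set.mem_ofPred_eq]

lemma exists_q {f : MarkovShift A → ℝ} (hV : Var1Finite f) {p1 : ℝ}
    (hP : HasGurevichPressure f p1) {K : ℕ} {F : Finset ℕ}
    (hK : ∀ a b : ℕ, Admissible A a → Admissible A b →
      ∃ p : ℕ → ℕ, p 0 = a ∧ p (K + 1) = b ∧ (∀ i ≤ K, A (p i) (p (i + 1)) = true) ∧
      ∀ i, 1 ≤ i → i ≤ K → p i ∈ F) (x0 : MarkovShift A) :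
    ∃ q : ℝ, 0 ≤ q ∧ ∀ x, Tn f 1 1 x ≤ ee q := by
  set a := x0.1 0 with hadef
  have ha : Admissible A a := ⟨x0, rfl⟩
  obtain ⟨V, hV'⟩ := var1_bound hV
  obtain ⟨B, hB0, hB⟩ := lower_on_finset hV (insert a F)
  have hper : ∀ b : {b // Admissible A b}, _ := fun b => periodic_point hK a b.1 ha b.2
  choose y hy1 hy2 hy3 hy4 hy5 using hper
  have hsum := (hP a ha).1 ((K + 1) + (1 + K)) (by omega)
  let Y : {b // Admissible A b} →
      {x : MarkovShift A // shift^[(K + 1) + (1 + K)] x = x ∧ x.1 0 = a} :=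
    fun b => ⟨y b, hy1 b, hy2 b⟩
  have hYinj : Function.Injective Y := by
    intro b b' h
    have : y b = y b' := congrArg Subtype.val h
    apply Subtype.ext
    rw [← hy3 b, ← hy3 b', this]
  have hsum2 := hsum.comp_injective hYinj
  set E : ℝ := V + ((K + 1 : ℕ) * B + K * B) with hE
  have hbound : ∀ (b : {b // Admissible A b}) (u : MarkovShift A), u.1 0 = b.1 →
      f u ≤ E + birkhoff f ((K + 1) + (1 + K)) (y b) := by
    intro b u hu
    rw [birkhoff_add f (K + 1) (1 + K), birkhoff_add f 1 K]
    have h1 := birkhoff_lower hB (K + 1) (y b) (hy4 b)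
    have h2 := birkhoff_lower hB K (shift^[1] (shift^[K + 1] (y b))) (by
      intro i hi
      rw [shift_iter_val, shift_iter_val]
      have := hy5 b i hi
      rwa [show i + 1 + (K + 1) = i + (K + 1 + 1) by omega])
    have h3 := hV' u (shift^[K + 1] (y b)) (by
      rw [shift_iter_val, zero_add, hy3, hu])
    have h4 : birkhoff f 1 (shift^[K + 1] (y b)) = f (shift^[K + 1] (y b)) := by
      simp [birkhoff]
    rw [h4]
    linarith
  set S : ℝ≥0∞ := ∑' b : {b // Admissible A b},
    ee (E + birkhoff f ((K + 1) + (1 + K)) (y b)) with hS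
  have hSfin : S ≠ ⊤ := by
    have h1 : S = ee E * ∑' b : {b // Admissible A b},
        ENNReal.ofReal (Real.exp (birkhoff f ((K + 1) + (1 + K)) (y b))) := by
      rw [hS, ← ENNReal.tsum_mul_left]
      exact tsum_congr fun b => ee_add _ _
    rw [h1]
    refine ENNReal.mul_ne_top (ee_ne_top _) ?_
    exact hsum2.tsum_ofReal_ne_top
  have hT : ∀ x, Tn f 1 1 x ≤ S := by
    intro x
    rw [Tn_one_subtype]
    let b : {y : MarkovShift A // shift y = x} → {b // Admissible A b} :=
      fun u => ⟨u.1.1 0, u.1, rfl⟩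
    have hbinj : Function.Injective b := by
      intro u u' h
      have h0 : u.1.1 0 = u'.1.1 0 := congrArg Subtype.val h
      exact Subtype.ext (ext_of_shift h0 (u.2.trans u'.2.symm))
    refine le_trans ?_ (ENNReal.tsum_comp_le_tsum_of_injective hbinj _)
    refine ENNReal.tsum_le_tsum fun u => ?_
    simp only [Pi.one_apply, mul_one]
    exact ee_mono (hbound (b u) u.1 rfl)
  refine ⟨S.toReal, ENNReal.toReal_nonneg, fun x => (hT x).trans ?_⟩
  rw [ee]
  refine (ENNReal.le_ofReal_iff_toReal_le hSfin (Real.exp_pos _).le).2 ?_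
  have := Real.add_one_le_exp S.toReal
  linarith

lemma Tn_beta_le {f : MarkovShift A → ℝ} {q : ℝ} (hq : ∀ x, Tn f 1 1 x ≤ ee q) {β : ℝ}
    (hβ : 1 ≤ β) (x : MarkovShift A) : Tn (fun x => β * f x) 1 1 x ≤ ee (β * q) := by
  have hfq : ∀ y, f y ≤ q := by
    intro y
    have h1 := hq (shift y)
    rw [Tn_one_subtype] at h1
    have h2 := (ENNReal.le_tsum (f := fun u : {u : MarkovShift A // shift u = shift y} =>
      ee (f u.1) * (1 : MarkovShift A → ℝ≥0∞) u.1) ⟨y, rfl⟩).trans h1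
    simp only [Pi.one_apply, mul_one] at h2
    exact Real.exp_le_exp.1 ((ENNReal.ofReal_le_ofReal_iff (Real.exp_pos _).le).1 h2)
  calc Tn (fun x => β * f x) 1 1 x
      = ∑' y : {y : MarkovShift A // shift y = x}, ee (β * f y.1) * 1 := Tn_one_subtype _ _ _
    _ ≤ ∑' y : {y : MarkovShift A // shift y = x}, ee ((β - 1) * q) * (ee (f y.1) * 1) := by
      refine ENNReal.tsum_le_tsum fun y => ?_
      rw [mul_one, mul_one, ← ee_add]
      apply ee_mono
      have := mul_le_mul_of_nonneg_left (hfq y.1) (sub_nonneg.2 hβ)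
      linarith
    _ = ee ((β - 1) * q) * Tn f 1 1 x := by
      rw [ENNReal.tsum_mul_left, Tn_one_subtype]; rfl
    _ ≤ ee ((β - 1) * q) * ee q := by gcongr; exact hq x
    _ = _ := by rw [← ee_add]; congr 1; ring

lemma ruelle_eq (φ : MarkovShift A → ℝ) {g : MarkovShift A → ℝ} (hg : ∀ x, 0 ≤ g x)
    (x : MarkovShift A) :
    ruelle φ g x = (Tn φ 1 (fun y => ENNReal.ofReal (g y)) x).toReal := by
  rw [Tn_one_subtype, ENNReal.tsum_toReal_eq]
  · unfold ruelle
    refine tsum_congr fun y => ?_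
    rw [ENNReal.toReal_mul, ee, ENNReal.toReal_ofReal (Real.exp_pos _).le,
      ENNReal.toReal_ofReal (hg _)]
  · exact fun y => ENNReal.mul_ne_top (ee_ne_top _) ENNReal.ofReal_ne_top

lemma Tn_sub_const (φ : MarkovShift A → ℝ) (p : ℝ) (g : MarkovShift A → ℝ≥0∞)
    (x : MarkovShift A) : Tn (fun y => φ y - p) 1 g x = ee (-p) * Tn φ 1 g x := by
  rw [Tn_one_subtype, Tn_one_subtype, ← ENNReal.tsum_mul_left]
  refine tsum_congr fun y => ?_
  rw [← mul_assoc, ← ee_add]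
  congr 2; ring

lemma duality {φ : MarkovShift A → ℝ} (hφ : Measurable φ) {p M : ℝ} {h : MarkovShift A → ℝ}
    {ν : Measure (MarkovShift A)} (hR : IsRPF φ p h ν) (hM : ∀ x, Tn φ 1 1 x ≤ ee M)
    (g : MarkovShift A → ℝ≥0∞) (hg : Measurable g) :
    ∫⁻ x, Tn φ 1 g x ∂ν = ee p * ∫⁻ x, g x ∂ν := by
  obtain ⟨-, -, -, hprob, hdual, -⟩ := hR
  have hfin : IsFiniteMeasure (dualMeas φ ν) := by
    constructor
    rw [← lintegral_one]
    have h1 := lintegral_dualMeas hφ ν (g := 1) measurable_one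
    calc _ = _ := h1
      _ ≤ ∫⁻ _, ee M ∂ν := lintegral_mono hM
      _ = ee M := by simp
      _ < ⊤ := (ee_ne_top M).lt_top
  have hfin2 : IsFiniteMeasure (ee p • ν) := ν.smul_finite (ee_ne_top p)
  have heq : dualMeas φ ν = ee p • ν := by
    refine ext_of_forall_lintegral_eq_of_IsFiniteMeasure fun u => ?_
    have hum : Measurable fun x => (u x : ℝ≥0∞) := u.continuous.measurable.coe_nnreal_ennreal
    rw [lintegral_dualMeas hφ ν hum, lintegral_smul_measure, smul_eq_mul]
    obtain ⟨C, hC⟩ : ∃ C : NNReal, ∀ x, u x ≤ C := by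
      obtain ⟨C, hC⟩ := u.isBounded_range.bddAbove
      exact ⟨C, fun x => hC ⟨x, rfl⟩⟩
    have hu := hdual (fun x => (u x : ℝ)) (NNReal.continuous_coe.comp u.continuous)
      ⟨C, fun x => by
        show |((u x : NNReal) : ℝ)| ≤ C
        rw [abs_of_nonneg (u x).coe_nonneg]
        exact NNReal.coe_le_coe.2 (hC x)⟩
    have hub : ∀ x, Tn φ 1 (fun y => (u y : ℝ≥0∞)) x ≤ C * ee M := by
      intro x
      calc _ ≤ Tn φ 1 (fun y => (C : ℝ≥0∞) * 1) x :=
            Tn_mono φ 1 (fun y => by rw [mul_one]; exact_mod_cast hC y) x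
        _ = C * Tn φ 1 1 x := by
          rw [Tn_one_subtype, Tn_one_subtype, ← ENNReal.tsum_mul_left]
          refine tsum_congr fun y => ?_
          rw [Pi.one_apply]; ring
        _ ≤ _ := by gcongr; exact hM x
    have hCM : (C : ℝ≥0∞) * ee M < ⊤ := ENNReal.mul_lt_top ENNReal.coe_lt_top (ee_ne_top M).lt_top
    have hl : ∫ x, ruelle φ (fun x => (u x : ℝ)) x ∂ν
        = (∫⁻ x, Tn φ 1 (fun y => (u y : ℝ≥0∞)) x ∂ν).toReal := by
      rw [← integral_toReal (measurable_Tn_one hφ hum).aemeasurable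
        (Eventually.of_forall fun x => lt_of_le_of_lt (hub x) hCM)]
      refine integral_congr_ae (Eventually.of_forall fun x => ?_)
      simp only
      rw [ruelle_eq φ (g := fun x => (u x : ℝ)) (fun x => (u x).coe_nonneg)]
      simp
    have hr : ∫ x, (u x : ℝ) ∂ν = (∫⁻ x, (u x : ℝ≥0∞) ∂ν).toReal := by
      rw [← integral_toReal hum.aemeasurable (Eventually.of_forall fun x => ENNReal.coe_lt_top)]
      rfl
    rw [hl, hr] at hu
    have hlfin : ∫⁻ x, Tn φ 1 (fun y => (u y : ℝ≥0∞)) x ∂ν ≠ ⊤ := by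
      refine ne_top_of_le_ne_top hCM.ne ((lintegral_mono hub).trans ?_)
      simp
    have hrfin : ∫⁻ x, (u x : ℝ≥0∞) ∂ν ≠ ⊤ := by
      refine ne_top_of_le_ne_top (ENNReal.coe_ne_top (r := C)) ?_
      calc _ ≤ ∫⁻ _, (C : ℝ≥0∞) ∂ν := lintegral_mono fun x => ENNReal.coe_le_coe.2 (hC x)
        _ = _ := by simp
    rw [← ENNReal.toReal_eq_toReal_iff' hlfin (ENNReal.mul_ne_top (ee_ne_top p) hrfin), hu,
      ENNReal.toReal_mul, ee, ENNReal.toReal_ofReal (Real.exp_pos _).le]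
  rw [← lintegral_dualMeas hφ ν hg, heq, lintegral_smul_measure, smul_eq_mul]

lemma Tn_h {φ : MarkovShift A → ℝ} {p : ℝ} {h : MarkovShift A → ℝ}
    {ν : Measure (MarkovShift A)} (hR : IsRPF φ p h ν) (x : MarkovShift A) :
    Tn φ 1 (fun y => ENNReal.ofReal (h y)) x = ee p * ENNReal.ofReal (h x) := by
  obtain ⟨-, hpos, heig, -, -, -⟩ := hR
  have h1 := heig x
  rw [ruelle_eq φ (fun y => (hpos y).le)] at h1
  have h2 : 0 < Real.exp p * h x := mul_pos (Real.exp_pos _) (hpos x)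
  rw [ee, ← ENNReal.ofReal_mul (Real.exp_pos _).le, ← h1, ENNReal.ofReal_toReal]
  intro htop
  rw [htop, ENNReal.toReal_top] at h1
  linarith

lemma lintegral_h {φ : MarkovShift A → ℝ} {p : ℝ} {h : MarkovShift A → ℝ}
    {ν : Measure (MarkovShift A)} (hR : IsRPF φ p h ν) :
    ∫⁻ x, ENNReal.ofReal (h x) ∂ν = 1 := by
  obtain ⟨-, hpos, -, -, -, hh_int⟩ := hR
  have hi : Integrable h ν := by
    by_contra hcon
    rw [integral_undef hcon] at hh_int
    exact zero_ne_one hh_int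
  rw [← ofReal_integral_eq_lintegral_ofReal hi (Eventually.of_forall fun x => (hpos x).le), hh_int,
    ENNReal.ofReal_one]

lemma birkhoff_affine (f : MarkovShift A → ℝ) (β p : ℝ) (n : ℕ) (x : MarkovShift A) :
    birkhoff (fun y => β * f y - p) n x = β * birkhoff f n x - n * p := by
  unfold birkhoff
  rw [Finset.sum_sub_distrib, ← Finset.mul_sum]
  simp

end helpers


/-- Gibbs inequality with exponential control in `β`: there exist `η₁, η₂` with
`e^{β η₁} ≤ μ_β[x₀ … x_{m-1}] / e^{β S_m f(x) - m P(βf)} ≤ e^{β η₂}` for all `β > 1`,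
all `x` and all `m ≥ 1`. -/
theorem gibbs_property_exponential_control
    (A : ℕ → ℕ → Bool)
    (hmix : TopologicallyMixing A)
    (hbip : FinitelyPrimitive A)
    (f : MarkovShift A → ℝ)
    (hWalters : SatisfiesWalters f)
    (hVar1 : Var1Finite f)
    (P : ℝ → ℝ)
    (hPfin : HasGurevichPressure f (P 1))
    (h : ℝ → MarkovShift A → ℝ)
    (ν : ℝ → Measure (MarkovShift A))
    (hRPF : ∀ β : ℝ, 1 < β → IsRPF (fun x => β * f x) (P β) (h β) (ν β)) :
    ∃ η₁ η₂ : ℝ, ∀ β : ℝ, 1 < β → ∀ x : MarkovShift A, ∀ m : ℕ, 1 ≤ m →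
      Real.exp (β * η₁) ≤
          ((gibbs (h β) (ν β)) (cylOf x m)).toReal /
            Real.exp (β * birkhoff f m x - m * P β) ∧
        ((gibbs (h β) (ν β)) (cylOf x m)).toReal /
            Real.exp (β * birkhoff f m x - m * P β) ≤ Real.exp (β * η₂) := by
  by_cases hne : Nonempty (MarkovShift A)
  swap
  · exact ⟨0, 0, fun β _ x => (hne ⟨x⟩).elim⟩
  obtain ⟨x0⟩ := hne
  obtain ⟨K, F, hKF⟩ := hbip
  have hK : ∀ a b : ℕ, Admissible A a → Admissible A b →
      ∃ p : ℕ → ℕ, p 0 = a ∧ p (K + 1) = b ∧ (∀ i ≤ K, A (p i) (p (i + 1)) = true) ∧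
      ∀ i, 1 ≤ i → i ≤ K → p i ∈ F := fun a b ha hb => bip_path (hKF a b ha hb)
  obtain ⟨C, hC0, hC⟩ := walters_bound hWalters hVar1
  obtain ⟨B, hB0, hB⟩ := lower_on_finset hVar1 F
  obtain ⟨q, hq0, hq⟩ := exists_q hVar1 hPfin hK x0
  have hfm : Measurable f := (continuous_of_walters hWalters).measurable
  set D : ℝ := C + K * B + K * q with hD
  refine ⟨-(C + D + D), C + D, ?_⟩
  intro β hβ x m hm
  have hR := hRPF β hβ
  have hprob : IsProbabilityMeasure (ν β) := hR.2.2.2.1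
  have hβ0 : 0 < β := by linarith
  set φ : MarkovShift A → ℝ := fun x => β * f x with hφ
  have hφm : Measurable φ := hfm.const_mul β
  have hM : ∀ x, Tn φ 1 1 x ≤ ee (β * q) := Tn_beta_le hq hβ.le
  have hdual := duality hφm hR hM
  have hPq : P β ≤ β * q := by
    have h1 := hdual 1 measurable_one
    have h2 : ee (P β) ≤ ee (β * q) := by
      calc ee (P β) = ee (P β) * ∫⁻ x, (1 : MarkovShift A → ℝ≥0∞) x ∂(ν β) := by simp
        _ = _ := h1.symm
        _ ≤ ∫⁻ _, ee (β * q) ∂(ν β) := lintegral_mono hM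
        _ = _ := by simp
    exact Real.exp_le_exp.1 ((ENNReal.ofReal_le_ofReal_iff (Real.exp_pos _).le).1 h2)
  set ψ : MarkovShift A → ℝ := fun y => β * f y - P β with hψ
  have hTψ : ∀ g x, Tn ψ 1 g x = ee (-(P β)) * Tn φ 1 g x := fun g x => Tn_sub_const φ (P β) g x
  have hee : ee (-(P β)) * ee (P β) = 1 := by rw [← ee_add, neg_add_cancel, ee_zero]
  have hψm : Measurable ψ := hφm.sub_const _
  have main := abstract_gibbs (ψ := ψ) (ν := ν β) (c := β * C) (d := β * D) (K := K) hψm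
    (H := fun y => ENNReal.ofReal (h β y)) (ENNReal.continuous_ofReal.comp hR.1)
    (by
      funext y
      rw [hTψ, Tn_h hR, ← mul_assoc, hee, one_mul])
    (lintegral_h hR)
    (by
      intro g hg
      rw [lintegral_congr (hTψ g), lintegral_const_mul _ (measurable_Tn_one hφm hg), hdual g hg,
        ← mul_assoc, hee, one_mul])
    (by
      intro n hn y z hyz
      rw [hψ, birkhoff_affine, birkhoff_affine]
      have := mul_le_mul_of_nonneg_left (hC n hn y z hyz) hβ0.le
      linarith)
    (by
      intro n hn z w
      obtain ⟨y, hy1, hy2, hy3⟩ := glue_point hK n hn z w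
      refine ⟨y, hy1, hy2, ?_⟩
      rw [hψ, birkhoff_affine, birkhoff_affine, birkhoff_add]
      have h1 := birkhoff_lower hB K (shift^[n] y) hy3
      have h2 := hC n hn z y hy1.symm
      have h3 : birkhoff f n z - (C + K * B) ≤ birkhoff f n y + birkhoff f K (shift^[n] y) := by
        linarith
      have h4 := mul_le_mul_of_nonneg_left h3 hβ0.le
      have h5 := mul_le_mul_of_nonneg_left hPq (Nat.cast_nonneg (α := ℝ) K)
      push_cast
      rw [hD]
      linarith)
    x m hm
  have hg : (gibbs (h β) (ν β)) (cylOf x m)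
      = ∫⁻ y in cylOf x m, ENNReal.ofReal (h β y) ∂(ν β) :=
    withDensity_apply _ (measurableSet_cylOf x m)
  rw [hψ, birkhoff_affine, ← hg] at main
  obtain ⟨hlo, hup⟩ := main
  set G := (gibbs (h β) (ν β)) (cylOf x m)
  have hGfin : G ≠ ⊤ := ne_top_of_le_ne_top (ee_ne_top _) hup
  constructor
  · rw [le_div_iff₀ (Real.exp_pos _), ← Real.exp_add]
    refine (ENNReal.ofReal_le_iff_le_toReal hGfin).1 (le_trans ?_ hlo)
    apply ee_mono
    linarith
  · rw [div_le_iff₀ (Real.exp_pos _), ← Real.exp_add]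
    refine ENNReal.toReal_le_of_le_ofReal (Real.exp_pos _).le (hup.trans ?_)
    apply ee_mono
    linarith

end MarkovShift
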